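/- (Gronwall lemma in the plane.) Let S, T > 0, A, B ≥ 0, and let f : [0,S] × [0,T] → [0,∞) be continuous and satisfy f(s,t) ≤ A + B·∫₀^s ∫₀^t f(u,v) dv du for all (s,t) ∈ [0,S] × [0,T]. Then f(s,t) ≤ A·h₀(B·s·t) for all (s,t) ∈ [0,S] × [0,T]. -/

import Mathlib

/-- The entire function `h₀(x) = ∑_{n≥0} xⁿ/(n!)²`. -/
noncomputable def h₀ (x : ℝ) : ℝ := ∑' n : ℕ, x ^ n / (n.factorial : ℝ) ^ 2

/-!
Iterating the inequality `n` times bounds `f(s,t)` by `A` times the `n`-th partial sum of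
`h₀(Bst)` plus `Bⁿ` times the `n`-fold iterated integral of `f`. An integrable `f` satisfying the
inequality is bounded above by some constant `M`, so that last term is at most `M (Bst)ⁿ/(n!)²`,
which tends to `0` because the series `h₀(Bst)` converges.
-/

open Set MeasureTheory
open scoped Nat

theorem summable_pow_div_factorial_sq (x : ℝ) : Summable fun n : ℕ ↦ x ^ n / (n ! : ℝ) ^ 2 := by
  refine Summable.of_norm_bounded (Real.summable_pow_div_factorial |x|) fun n ↦ ?_
  have one_le_factorial : (1 : ℝ) ≤ n ! := by exact_mod_cast n.factorial_pos
  rw [norm_div, norm_pow, Real.norm_eq_abs, norm_pow, Real.norm_natCast]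
  gcongr
  exact le_self_pow₀ one_le_factorial two_ne_zero

theorem setIntegral_Icc_prod_eq_intervalIntegral {E : Type*} [NormedAddCommGroup E]
    [NormedSpace ℝ E] {f : ℝ × ℝ → E} {a b : ℝ × ℝ} (hab : a ≤ b)
    (hf : IntegrableOn f (Icc a b)) :
    ∫ p in Icc a b, f p = ∫ x in a.1..b.1, ∫ y in a.2..b.2, f (x, y) := by
  rw [Icc_prod_eq] at hf ⊢
  simp only [Measure.volume_eq_prod, intervalIntegral.integral_of_le hab.1,
    intervalIntegral.integral_of_le hab.2, ← integral_Icc_eq_integral_Ioc]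
  exact setIntegral_prod f hf

theorem mul_setIntegral_Icc_pow_div_factorial_sq (B : ℝ) (n : ℕ) {p : ℝ × ℝ} (hp : 0 ≤ p) :
    B * ∫ q in Icc 0 p, (B * q.1 * q.2) ^ n / (n ! : ℝ) ^ 2 =
      (B * p.1 * p.2) ^ (n + 1) / ((n + 1)! : ℝ) ^ 2 := by
  have hint : IntegrableOn (fun q : ℝ × ℝ ↦ (B * q.1 * q.2) ^ n / (n ! : ℝ) ^ 2) (Icc 0 p) :=
    Continuous.integrableOn_Icc (by fun_prop)
  rw [setIntegral_Icc_prod_eq_intervalIntegral hp hint]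
  simp only [mul_pow, intervalIntegral.integral_div, intervalIntegral.integral_const_mul,
    intervalIntegral.integral_mul_const, integral_pow, Prod.fst_zero, Prod.snd_zero,
    zero_pow n.succ_ne_zero, sub_zero, Nat.factorial_succ, Nat.cast_mul, Nat.cast_succ]
  field_simp
  ring

section Gronwall

variable {A B : ℝ} {P : ℝ × ℝ} {f : ℝ × ℝ → ℝ}

theorem bddAbove_image_of_le_add_mul_setIntegral (hB : 0 ≤ B) (hf : IntegrableOn f (Icc 0 P))
    (hle : ∀ p ∈ Icc 0 P, f p ≤ A + B * ∫ q in Icc 0 p, f q) : BddAbove (f '' Icc 0 P) := by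
  refine ⟨A + B * ∫ q in Icc 0 P, |f q|, forall_mem_image.2 fun p hp ↦ (hle p hp).trans ?_⟩
  gcongr
  calc ∫ q in Icc 0 p, f q
      ≤ ∫ q in Icc 0 p, |f q| := (le_abs_self _).trans abs_integral_le_integral_abs
    _ ≤ ∫ q in Icc 0 P, |f q| := setIntegral_mono_set hf.abs
        (ae_of_all _ fun _ ↦ abs_nonneg _) (Icc_subset_Icc_right hp.2).eventuallyLE

theorem le_sum_add_of_le_add_mul_setIntegral {M : ℝ} (hB : 0 ≤ B) (hf : IntegrableOn f (Icc 0 P))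
    (hle : ∀ p ∈ Icc 0 P, f p ≤ A + B * ∫ q in Icc 0 p, f q) (hM : ∀ p ∈ Icc 0 P, f p ≤ M)
    (n : ℕ) {p : ℝ × ℝ} (hp : p ∈ Icc 0 P) :
    f p ≤ A * ∑ k ∈ Finset.range n, (B * p.1 * p.2) ^ k / (k ! : ℝ) ^ 2 +
      M * ((B * p.1 * p.2) ^ n / (n ! : ℝ) ^ 2) := by
  induction n generalizing p with
  | zero => simpa using hM p hp
  | succ n ih =>
    have hsub : Icc 0 p ⊆ Icc 0 P := Icc_subset_Icc_right hp.2
    let summand (k : ℕ) (q : ℝ × ℝ) : ℝ := (B * q.1 * q.2) ^ k / (k ! : ℝ) ^ 2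
    have hsummand (k : ℕ) : IntegrableOn (summand k) (Icc 0 p) :=
      Continuous.integrableOn_Icc (by fun_prop)
    have hsum : IntegrableOn (fun q ↦ A * ∑ k ∈ Finset.range n, summand k q) (Icc 0 p) :=
      (integrable_finsetSum _ fun k _ ↦ hsummand k).const_mul A
    have hrem : IntegrableOn (fun q ↦ M * summand n q) (Icc 0 p) := (hsummand n).const_mul M
    calc f p ≤ A + B * ∫ q in Icc 0 p, f q := hle p hp
      _ ≤ A + B * ∫ q in Icc 0 p, (A * ∑ k ∈ Finset.range n, summand k q + M * summand n q) := by
        gcongr A + B * ?_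
        exact setIntegral_mono_on (hf.mono_set hsub) (hsum.add hrem) measurableSet_Icc
          fun q hq ↦ ih (hsub hq)
      _ = A * (∑ k ∈ Finset.range n, B * (∫ q in Icc 0 p, summand k q) + 1) +
          M * (B * ∫ q in Icc 0 p, summand n q) := by
        rw [integral_add hsum hrem, integral_const_mul, integral_const_mul,
          integral_finsetSum _ fun k _ ↦ hsummand k, ← Finset.mul_sum]
        ring
      _ = _ := by
        simp only [summand, mul_setIntegral_Icc_pow_div_factorial_sq B _ hp.1,
          Finset.sum_range_succ', pow_zero, Nat.factorial_zero, Nat.cast_one, one_pow, div_one]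

theorem le_mul_h₀_of_le_add_mul_setIntegral (hB : 0 ≤ B) (hf : IntegrableOn f (Icc 0 P))
    (hle : ∀ p ∈ Icc 0 P, f p ≤ A + B * ∫ q in Icc 0 p, f q) {p : ℝ × ℝ} (hp : p ∈ Icc 0 P) :
    f p ≤ A * h₀ (B * p.1 * p.2) := by
  obtain ⟨M, hM⟩ := bddAbove_image_of_le_add_mul_setIntegral hB hf hle
  have hseries := summable_pow_div_factorial_sq (B * p.1 * p.2)
  have hlim := (hseries.hasSum.tendsto_sum_nat.const_mul A).add
    (hseries.tendsto_atTop_zero.const_mul M)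
  rw [mul_zero, add_zero] at hlim
  exact ge_of_tendsto' hlim fun n ↦
    le_sum_add_of_le_add_mul_setIntegral hB hf hle (forall_mem_image.1 hM) n hp

end Gronwall

theorem stmt_14_general {S T A B : ℝ} (hB : 0 ≤ B) {f : ℝ × ℝ → ℝ}
    (hf : IntegrableOn f (Icc 0 S ×ˢ Icc 0 T))
    (hineq : ∀ s t : ℝ, s ∈ Icc 0 S → t ∈ Icc 0 T →
      f (s, t) ≤ A + B * ∫ u in (0 : ℝ)..s, ∫ v in (0 : ℝ)..t, f (u, v)) :
    ∀ s t : ℝ, s ∈ Icc 0 S → t ∈ Icc 0 T → f (s, t) ≤ A * h₀ (B * s * t) := by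
  intro s t hs ht
  rw [Icc_prod_Icc] at hf
  refine le_mul_h₀_of_le_add_mul_setIntegral hB hf (fun p hp ↦ ?_)
    (p := (s, t)) ⟨⟨hs.1, ht.1⟩, ⟨hs.2, ht.2⟩⟩
  rw [setIntegral_Icc_prod_eq_intervalIntegral hp.1 (hf.mono_set (Icc_subset_Icc_right hp.2))]
  exact hineq p.1 p.2 ⟨hp.1.1, hp.2.1⟩ ⟨hp.1.2, hp.2.2⟩

/-- Gronwall lemma in the plane: if `f : [0,S] × [0,T] → [0,∞)` is continuous and
`f(s,t) ≤ A + B·∫₀^s∫₀^t f(u,v) dv du` on `[0,S] × [0,T]` with `A, B ≥ 0`, then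
`f(s,t) ≤ A·h₀(B·s·t)` on `[0,S] × [0,T]`. -/
theorem stmt_14 (S T A B : ℝ) (hS : 0 < S) (hT : 0 < T) (hA : 0 ≤ A) (hB : 0 ≤ B)
    (f : ℝ × ℝ → ℝ) (hf : ContinuousOn f (Set.Icc 0 S ×ˢ Set.Icc 0 T))
    (hnonneg : ∀ s t : ℝ, s ∈ Set.Icc 0 S → t ∈ Set.Icc 0 T → 0 ≤ f (s, t))
    (hineq : ∀ s t : ℝ, s ∈ Set.Icc 0 S → t ∈ Set.Icc 0 T →
      f (s, t) ≤ A + B * ∫ u in (0:ℝ)..s, ∫ v in (0:ℝ)..t, f (u, v)) :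
    ∀ s t : ℝ, s ∈ Set.Icc 0 S → t ∈ Set.Icc 0 T → f (s, t) ≤ A * h₀ (B * s * t) :=
  stmt_14_general hB (hf.integrableOn_compact (isCompact_Icc.prod isCompact_Icc)) hineq
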